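/- arXiv:1502.07990 — 6 statements merged into one kernel-verified Lean document; each statement's English description precedes it below -/
import Mathlib

section
/- Let α and β be real numbers with 0 < α, 0 < β and α + β < π/2. Set ω = cos(β)/√(cos²(β) − sin²(α)) and r = ω·cos(α) − √(ω²·cos²(α) − 1). Then ω²·cos²(α) − 1 ≥ 0, r satisfies the quadratic equation r² − 2ω·r·cos(α) + 1 = 0, one has 0 < r < 1, and moreover r = cos(α + β)/√(cos²(β) − sin²(α)). -/
open Real

theorem stmt_3 (α β : ℝ) (hα : 0 < α) (hβ : 0 < β) (hsum : α + β < π / 2)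
    (ω r : ℝ) (hω : ω = cos β / Real.sqrt (cos β ^ 2 - sin α ^ 2))
    (hr : r = ω * cos α - Real.sqrt (ω ^ 2 * cos α ^ 2 - 1)) :
    ω ^ 2 * cos α ^ 2 - 1 ≥ 0 ∧
      r ^ 2 - 2 * ω * r * cos α + 1 = 0 ∧
      0 < r ∧ r < 1 ∧
      r = cos (α + β) / Real.sqrt (cos β ^ 2 - sin α ^ 2) := by
  have hsa : 0 < sin α := sin_pos_of_pos_of_lt_pi hα (by linarith [pi_pos])
  have hsb : 0 < sin β := sin_pos_of_pos_of_lt_pi hβ (by linarith [pi_pos])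
  have hc : 0 < cos (α + β) := cos_pos_of_mem_Ioo ⟨by linarith [pi_pos], hsum⟩
  have hab : 0 < sin α * sin β := mul_pos hsa hsb
  have ea := sin_sq_add_cos_sq α
  have eb := sin_sq_add_cos_sq β
  have hadd := cos_add α β
  have hD : cos β ^ 2 - sin α ^ 2
      = cos (α + β) * (cos (α + β) + 2 * (sin α * sin β)) := by
    rw [hadd]
    have h1 : cos α ^ 2 = 1 - sin α ^ 2 := by linarith
    have h2 : sin β ^ 2 = 1 - cos β ^ 2 := by linarith
    linear_combination (-cos β ^ 2) * h1 + sin α ^ 2 * h2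
  have hDpos : 0 < cos β ^ 2 - sin α ^ 2 := by rw [hD]; positivity
  have hs := sqrt_pos.2 hDpos
  have hs2 := sq_sqrt hDpos.le
  set s := Real.sqrt (cos β ^ 2 - sin α ^ 2) with hsdef
  have hkey : ω ^ 2 * cos α ^ 2 - 1 = (sin α * sin β / s) ^ 2 := by
    rw [hω]
    field_simp
    rw [hs2]
    have h1 : cos α ^ 2 = 1 - sin α ^ 2 := by linarith
    have h2 : sin β ^ 2 = 1 - cos β ^ 2 := by linarith
    rw [h1, h2]; ring
  have hsq : Real.sqrt (ω ^ 2 * cos α ^ 2 - 1) = sin α * sin β / s := by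
    rw [hkey, sqrt_sq (by positivity)]
  have hnn : ω ^ 2 * cos α ^ 2 - 1 ≥ 0 := by rw [hkey]; positivity
  have hrr : r = cos (α + β) / s := by
    rw [hr, hsq, hω, hadd]; ring
  have hquad := sq_sqrt hnn
  refine ⟨hnn, ?_, ?_, ?_, hrr⟩
  · have h3 : Real.sqrt (ω ^ 2 * cos α ^ 2 - 1) = ω * cos α - r := by linarith
    rw [h3] at hquad
    linarith
  · rw [hrr]; positivity
  · rw [hrr, div_lt_one hs]
    apply lt_of_pow_lt_pow_left₀ 2 hs.le
    rw [hs2, hD]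
    nlinarith [mul_pos hc hab]
end

section
/- Let α and β be real numbers with 0 < α, 0 < β and α + β < π/2. Then cos(α + β) < √(cos²(β) − sin²(α)); consequently the quantity h = cos(α + β)/√(cos²(β) − sin²(α)) satisfies 0 < h < 1. -/
open Real

theorem stmt_5 (α β : ℝ) (hα : 0 < α) (hβ : 0 < β) (hsum : α + β < π / 2) :
    cos (α + β) < Real.sqrt (cos β ^ 2 - sin α ^ 2) ∧
      0 < cos (α + β) / Real.sqrt (cos β ^ 2 - sin α ^ 2) ∧
      cos (α + β) / Real.sqrt (cos β ^ 2 - sin α ^ 2) < 1 := by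
  have hc : 0 < cos (α + β) := cos_pos_of_mem_Ioo ⟨by linarith [pi_pos], hsum⟩
  have hsa : 0 < sin α := sin_pos_of_pos_of_lt_pi hα (by linarith [pi_pos])
  have hsb : 0 < sin β := sin_pos_of_pos_of_lt_pi hβ (by linarith [pi_pos])
  have key : cos β ^ 2 - sin α ^ 2
      = cos (α + β) ^ 2 + cos (α + β) * (2 * (sin α * sin β)) := by
    rw [cos_add]
    have h1 := sin_sq_add_cos_sq α
    have h2 := sin_sq_add_cos_sq β
    linear_combination (-(cos β ^ 2)) * h1 + (sin α ^ 2) * h2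
  have hlt : cos (α + β) < Real.sqrt (cos β ^ 2 - sin α ^ 2) := by
    apply Real.lt_sqrt_of_sq_lt
    rw [key]
    have : 0 < cos (α + β) * (2 * (sin α * sin β)) := by positivity
    linarith
  have hs := hc.trans hlt
  exact ⟨hlt, div_pos hc hs, (div_lt_one hs).2 hlt⟩
end

section
/- Fix an integer q ≥ 3. For each integer p, let a_p = cos(π/q + π/p), b_p = cos²(π/q) − sin²(π/p), and d_p = 2·a_p·√(b_p)/(a_p² + b_p). Then p²·(1 − d_p²) → π²·tan²(π/q) as p → ∞. -/
open Real Filter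

theorem stmt_10 (q : ℕ) (hq : 3 ≤ q) :
    Tendsto (fun p : ℕ =>
        (p : ℝ) ^ 2 *
          (1 - (2 * cos (π / q + π / p) * Real.sqrt (cos (π / q) ^ 2 - sin (π / p) ^ 2) /
              (cos (π / q + π / p) ^ 2 + (cos (π / q) ^ 2 - sin (π / p) ^ 2))) ^ 2))
      atTop (nhds (π ^ 2 * tan (π / q) ^ 2)) := by
  have hq' : (3 : ℝ) ≤ q := by exact_mod_cast hq
  have hpi := Real.pi_pos
  have hA0 : 0 < π / q := by positivity
  have hA1 : π / q < π / 2 := by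
    apply div_lt_div_of_pos_left hpi (by norm_num) (by linarith)
  generalize π / (q : ℝ) = A at *
  have hc : 0 < cos A := cos_pos_of_mem_Ioo ⟨by linarith, hA1⟩
  have hx : Tendsto (fun p : ℕ => π / (p : ℝ)) atTop (nhds 0) :=
    tendsto_const_div_atTop_nhds_zero_nat π
  have hx' : Tendsto (fun p : ℕ => π / (p : ℝ)) atTop (nhdsWithin 0 {0}ᶜ) := by
    refine tendsto_nhdsWithin_iff.2 ⟨hx, ?_⟩
    filter_upwards [eventually_gt_atTop 0] with p hp
    have : (0 : ℝ) < p := by exact_mod_cast hp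
    have : π / (p : ℝ) ≠ 0 := by positivity
    simpa using this
  have ht := (hasDerivAt_iff_tendsto_slope_zero.1
    (Real.hasDerivAt_tan (x := 0) (by simp))).comp hx'
  have h1 : Tendsto (fun p : ℕ => (π * ((π / (p : ℝ))⁻¹ * tan (π / p))) ^ 2 * tan A ^ 2) atTop
      (nhds (π ^ 2 * tan A ^ 2)) := by
    have h2 : Tendsto (fun p : ℕ => (π / (p : ℝ))⁻¹ * tan (π / p)) atTop (nhds 1) := by
      simpa [Function.comp_def] using ht
    simpa using ((h2.const_mul π).pow 2).mul_const (tan A ^ 2)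
  refine h1.congr' ?_
  have e1 : ∀ᶠ p : ℕ in atTop, 0 < cos (A + π / (p : ℝ)) := by
    have : Tendsto (fun p : ℕ => cos (A + π / (p : ℝ))) atTop (nhds (cos (A + 0))) :=
      (Real.continuous_cos.tendsto _).comp (hx.const_add A)
    exact this.eventually_const_lt (by simpa using hc)
  have e2 : ∀ᶠ p : ℕ in atTop, 0 < cos (A - π / (p : ℝ)) := by
    have : Tendsto (fun p : ℕ => cos (A - π / (p : ℝ))) atTop (nhds (cos (A - 0))) :=
      (Real.continuous_cos.tendsto _).comp (hx.const_sub A)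
    exact this.eventually_const_lt (by simpa using hc)
  have e3 : ∀ᶠ p : ℕ in atTop, 0 < cos (π / (p : ℝ)) := by
    have : Tendsto (fun p : ℕ => cos (π / (p : ℝ))) atTop (nhds (cos 0)) :=
      (Real.continuous_cos.tendsto _).comp hx
    exact this.eventually_const_lt (by simp)
  filter_upwards [e1, e2, e3, eventually_gt_atTop 0] with p h1 h2 h3 hp
  have hp' : (0 : ℝ) < p := by exact_mod_cast hp
  have hz : π * ((π / (p : ℝ))⁻¹ * tan (π / p)) = p * tan (π / p) := by
    field_simp
  rw [hz]
  generalize π / (p : ℝ) = x at *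
  have hb : cos A ^ 2 - sin x ^ 2 = cos (A + x) * cos (A - x) := by
    rw [cos_add, cos_sub]
    linear_combination (sin x ^ 2) * sin_sq_add_cos_sq A - cos A ^ 2 * sin_sq_add_cos_sq x
  have hs : cos (A + x) ^ 2 + cos (A + x) * cos (A - x) = cos (A + x) * (2 * cos A * cos x) := by
    rw [cos_add, cos_sub]; ring
  rw [hb, hs, div_pow, mul_pow _ (√_), Real.sq_sqrt (by positivity), tan_eq_sin_div_cos,
    tan_eq_sin_div_cos]
  have : cos (A + x) * cos (A - x) = (cos A * cos x) ^ 2 - (sin A * sin x) ^ 2 := by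
    rw [cos_add, cos_sub]; ring
  have hk : (2 * cos (A + x)) ^ 2 * (cos (A + x) * cos (A - x)) /
      (cos (A + x) * (2 * cos A * cos x)) ^ 2
      = (cos (A + x) * cos (A - x)) / (cos A * cos x) ^ 2 := by
    field_simp
  rw [hk, this]
  field_simp
  ring
end

section
/- Fix an integer q ≥ 3. For each integer p, let a_p = cos(π/q + π/p), b_p = cos²(π/q) − sin²(π/p), d_p = 2·a_p·√(b_p)/(a_p² + b_p), and δ_p = ln((1 + d_p)/(1 − d_p)). Then δ_p / ln(p) → 2 as p → ∞. -/
open Real Filter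

lemma aux_alg (a s K : ℝ) (ha : 0 < a) (hK : K ≠ 0) (h : a ^ 2 - s ^ 2 = K) :
    (1 + 2 * a * s / (a ^ 2 + s ^ 2)) / (1 - 2 * a * s / (a ^ 2 + s ^ 2)) = (a + s) ^ 4 / K ^ 2 := by
  have h1 : a ^ 2 + s ^ 2 ≠ 0 := by positivity
  have h2 : (a - s) * (a + s) ≠ 0 := by
    intro h0; apply hK; rw [← h, ← h0]; ring
  have h3 : a - s ≠ 0 := left_ne_zero_of_mul h2
  have h4 : a + s ≠ 0 := right_ne_zero_of_mul h2
  have e1 : 1 + 2 * a * s / (a ^ 2 + s ^ 2) = (a + s) ^ 2 / (a ^ 2 + s ^ 2) := by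
    field_simp; ring
  have e2 : 1 - 2 * a * s / (a ^ 2 + s ^ 2) = (a - s) ^ 2 / (a ^ 2 + s ^ 2) := by
    field_simp; ring
  have e3 : K = (a - s) * (a + s) := by rw [← h]; ring
  rw [e1, e2, e3]
  field_simp

theorem stmt_11 (q : ℕ) (hq : 3 ≤ q) :
    Tendsto (fun p : ℕ =>
        Real.log
            ((1 + 2 * cos (π / q + π / p) * Real.sqrt (cos (π / q) ^ 2 - sin (π / p) ^ 2) /
                (cos (π / q + π / p) ^ 2 + (cos (π / q) ^ 2 - sin (π / p) ^ 2))) /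
              (1 - 2 * cos (π / q + π / p) * Real.sqrt (cos (π / q) ^ 2 - sin (π / p) ^ 2) /
                (cos (π / q + π / p) ^ 2 + (cos (π / q) ^ 2 - sin (π / p) ^ 2)))) /
          Real.log p)
      atTop (nhds 2) := by
  have hq' : (3 : ℝ) ≤ q := by exact_mod_cast hq
  have hθ0 : 0 < π / q := by positivity
  have hθ1 : π / q < π / 2 := by
    apply div_lt_div_of_pos_left pi_pos (by norm_num) (by linarith)
  generalize π / (q : ℝ) = θ at *
  have hc : 0 < cos θ := cos_pos_of_mem_Ioo ⟨by linarith, hθ1⟩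
  have hs : 0 < sin θ := sin_pos_of_pos_of_lt_pi hθ0 (by linarith [pi_pos])
  have hx : Tendsto (fun p : ℕ => π / (p : ℝ)) atTop (nhds 0) :=
    tendsto_const_div_atTop_nhds_zero_nat π
  have hA : Tendsto (fun p : ℕ => cos (θ + π / p)) atTop (nhds (cos θ)) := by
    have : Continuous fun x : ℝ => cos (θ + x) := by fun_prop
    simpa [Function.comp_def] using (this.tendsto 0).comp hx
  have hB : Tendsto (fun p : ℕ => cos θ ^ 2 - sin (π / p) ^ 2) atTop (nhds (cos θ ^ 2)) := by
    have : Continuous fun x : ℝ => cos θ ^ 2 - sin x ^ 2 := by fun_prop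
    simpa [Function.comp_def] using (this.tendsto 0).comp hx
  have hS : Tendsto (fun p : ℕ => √(cos θ ^ 2 - sin (π / p) ^ 2)) atTop (nhds (cos θ)) := by
    have := (Real.continuous_sqrt.tendsto _).comp hB
    rwa [Real.sqrt_sq hc.le] at this
  have hC : Tendsto (fun p : ℕ => sinc (π / p)) atTop (nhds 1) := by
    simpa [Function.comp_def] using (Real.continuous_sinc.tendsto 0).comp hx
  have hG : Tendsto (fun p : ℕ => (cos (θ + π / p) + √(cos θ ^ 2 - sin (π / p) ^ 2)) ^ 4 /
      (2 * cos (θ + π / p) * sin θ * (π * sinc (π / p))) ^ 2) atTop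
      (nhds ((cos θ + cos θ) ^ 4 / (2 * cos θ * sin θ * (π * 1)) ^ 2)) := by
    refine ((hA.add hS).pow 4).div ((((hA.const_mul 2).mul_const _).mul (hC.const_mul π)).pow 2) ?_
    positivity
  have hL := hG.log (by positivity)
  have hlog : Tendsto (fun p : ℕ => Real.log (p : ℝ)) atTop atTop :=
    Real.tendsto_log_atTop.comp tendsto_natCast_atTop_atTop
  have hfin := (hL.div_atTop hlog).const_add 2
  rw [add_zero] at hfin
  refine hfin.congr' ?_
  filter_upwards [hA.eventually_const_lt hc, hB.eventually_const_lt (pow_pos hc 2),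
    hC.eventually_const_lt one_pos, eventually_ge_atTop 2] with p ha hb hsc hp
  have hp' : (2 : ℝ) ≤ p := by exact_mod_cast hp
  have hp0 : (0 : ℝ) < p := by linarith
  have hlp : 0 < Real.log p := Real.log_pos (by linarith)
  have hsin : sin (π / p) = π / p * sinc (π / p) := by
    rw [sinc_of_ne_zero (by positivity)]
    field_simp
  have hsq := Real.sq_sqrt hb.le
  have hspos := Real.sqrt_pos.2 hb
  have hK : cos (θ + π / p) ^ 2 - √(cos θ ^ 2 - sin (π / p) ^ 2) ^ 2 =
      -(2 * cos (θ + π / p) * sin θ * sin (π / p)) := by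
    rw [hsq, cos_add]
    linear_combination (cos θ ^ 2) * sin_sq_add_cos_sq (π / p) -
      (sin (π / p)) ^ 2 * sin_sq_add_cos_sq θ
  have hsx : 0 < sin (π / p) := by rw [hsin]; positivity
  have key := aux_alg _ _ _ ha (by
    have : 0 < 2 * cos (θ + π / p) * sin θ * sin (π / p) := by positivity
    exact neg_ne_zero.2 this.ne') hK
  rw [hsq] at key
  rw [key]
  have e : (cos (θ + π / p) + √(cos θ ^ 2 - sin (π / p) ^ 2)) ^ 4 /
      (-(2 * cos (θ + π / p) * sin θ * sin (π / p))) ^ 2 = (p : ℝ) ^ 2 *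
      ((cos (θ + π / p) + √(cos θ ^ 2 - sin (π / p) ^ 2)) ^ 4 /
      (2 * cos (θ + π / p) * sin θ * (π * sinc (π / p))) ^ 2) := by
    have : π * sinc (π / p) = p * sin (π / p) := by rw [hsin]; field_simp
    rw [this]
    generalize √(cos θ ^ 2 - sin (π / p) ^ 2) = s at *
    field_simp
  rw [e, Real.log_mul (by positivity) (by positivity), Real.log_pow]
  push_cast
  field_simp
end

section
/- For positive integers p and q, let a_{p,q} = cos(π/q + π/p), b_{p,q} = cos²(π/q) − sin²(π/p), and d_{p,q} = 2·a_{p,q}·√(b_{p,q})/(a_{p,q}² + b_{p,q}). Then p²·q²·(1 − d_{p,q}²) → π⁴ as p → ∞ and q → ∞ (jointly, along the product filter). -/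
open Real Filter

lemma aux_alg_s12 (x y : ℝ) (hx : cos x ≠ 0) (hy : cos y ≠ 0) (ha : cos (x + y) ≠ 0)
    (hb : 0 ≤ cos x ^ 2 - sin y ^ 2) :
    1 - (2 * cos (x + y) * Real.sqrt (cos x ^ 2 - sin y ^ 2) /
      (cos (x + y) ^ 2 + (cos x ^ 2 - sin y ^ 2))) ^ 2 = (tan x * tan y) ^ 2 := by
  have h1 : cos x ^ 2 - sin y ^ 2 = cos (x + y) * cos (x - y) := by
    rw [cos_add, cos_sub]
    linear_combination (-cos x ^ 2) * (sin_sq_add_cos_sq y) + sin y ^ 2 * (sin_sq_add_cos_sq x)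
  have h2 : cos (x + y) ^ 2 + (cos x ^ 2 - sin y ^ 2) = 2 * cos (x + y) * (cos x * cos y) := by
    rw [h1, cos_sub, cos_add]; ring
  rw [h2, div_pow, mul_pow _ (Real.sqrt _), Real.sq_sqrt hb, h1, tan_eq_sin_div_cos,
    tan_eq_sin_div_cos]
  have h3 : cos (x - y) = cos (x + y) + 2 * (sin x * sin y) := by
    rw [cos_sub, cos_add]; ring
  have h4 : cos x * cos y = cos (x + y) + sin x * sin y := by
    rw [cos_add]; ring
  have h5 : (sin x / cos x * (sin y / cos y)) = (sin x * sin y) / (cos x * cos y) := by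
    field_simp
  have h6 : cos x * cos y ≠ 0 := mul_ne_zero hx hy
  rw [h5, h3]
  rw [h4] at h6 ⊢
  generalize cos (x + y) = a at *
  generalize sin x * sin y = s at *
  field_simp
  ring

lemma aux_zero : Tendsto (fun n : ℕ => π / (n : ℝ)) atTop (nhds 0) :=
  tendsto_const_nhds.div_atTop tendsto_natCast_atTop_atTop

lemma aux_tan : Tendsto (fun n : ℕ => (n : ℝ) * tan (π / n)) atTop (nhds π) := by
  have h : Tendsto (fun n : ℕ => π * sinc (π / (n : ℝ)) / cos (π / (n : ℝ))) atTop
      (nhds (π * sinc 0 / cos 0)) :=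
    ((continuous_sinc.tendsto 0).comp aux_zero |>.const_mul π).div
      ((continuous_cos.tendsto 0).comp aux_zero) (by simp)
  simp only [sinc_zero, cos_zero, mul_one, div_one] at h
  refine h.congr' ?_
  filter_upwards [eventually_gt_atTop 0] with n hn
  have hn' : (n : ℝ) ≠ 0 := by positivity
  have hp := pi_ne_zero
  rw [sinc_of_ne_zero (by positivity), tan_eq_sin_div_cos]
  field_simp

theorem stmt_12 :
    Tendsto (fun pq : ℕ × ℕ =>
        (pq.1 : ℝ) ^ 2 * (pq.2 : ℝ) ^ 2 *
          (1 - (2 * cos (π / pq.2 + π / pq.1) *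
              Real.sqrt (cos (π / pq.2) ^ 2 - sin (π / pq.1) ^ 2) /
              (cos (π / pq.2 + π / pq.1) ^ 2 +
                (cos (π / pq.2) ^ 2 - sin (π / pq.1) ^ 2))) ^ 2))
      (atTop ×ˢ atTop) (nhds (π ^ 4)) := by
  have hp : Tendsto (fun pq : ℕ × ℕ => π / (pq.1 : ℝ)) (atTop ×ˢ atTop) (nhds 0) :=
    aux_zero.comp tendsto_fst
  have hq : Tendsto (fun pq : ℕ × ℕ => π / (pq.2 : ℝ)) (atTop ×ˢ atTop) (nhds 0) :=
    aux_zero.comp tendsto_snd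
  have cp := (continuous_cos.tendsto 0).comp hp
  have sp := (continuous_sin.tendsto 0).comp hp
  have cq := (continuous_cos.tendsto 0).comp hq
  have ca := (continuous_cos.tendsto (0 + 0)).comp (hq.add hp)
  have cb := (cq.pow 2).sub (sp.pow 2)
  have T := ((aux_tan.comp (tendsto_fst (f := atTop) (g := (atTop : Filter ℕ)))).pow 2).mul
    ((aux_tan.comp (tendsto_snd (f := (atTop : Filter ℕ)) (g := atTop))).pow 2)
  rw [show π ^ 4 = π ^ 2 * π ^ 2 by ring]
  refine T.congr' ?_
  filter_upwards [cp.eventually_ne (b₂ := 0) (by simp), cq.eventually_ne (b₂ := 0) (by simp),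
    ca.eventually_ne (b₂ := 0) (by simp), cb.eventually (lt_mem_nhds (a := 0) (by simp))]
    with pq h1 h2 h3 h4
  simp only [Function.comp_apply] at h1 h2 h3 h4 ⊢
  rw [aux_alg_s12 _ _ h2 h1 h3 h4.le]
  ring
end

section
/- For positive integers p and q, let a_{p,q} = cos(π/q + π/p), b_{p,q} = cos²(π/q) − sin²(π/p), d_{p,q} = 2·a_{p,q}·√(b_{p,q})/(a_{p,q}² + b_{p,q}), and δ_{p,q} = ln((1 + d_{p,q})/(1 − d_{p,q})). Then δ_{p,q} / (ln(p) + ln(q)) → 2 as p → ∞ and q → ∞ (jointly, along the product filter). -/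
open Real Filter

lemma aux_ratio (x y P Q : ℝ) (hP : 0 < P) (hQ : 0 < Q) (hx : 0 < sin x) (hy : 0 < sin y)
    (ha : 0 < cos (x + y)) (hb : 0 < cos (x - y)) :
    (1 + 2 * cos (x + y) * Real.sqrt (cos x ^ 2 - sin y ^ 2) /
        (cos (x + y) ^ 2 + (cos x ^ 2 - sin y ^ 2))) /
      (1 - 2 * cos (x + y) * Real.sqrt (cos x ^ 2 - sin y ^ 2) /
        (cos (x + y) ^ 2 + (cos x ^ 2 - sin y ^ 2))) =
    ((cos (x + y) + Real.sqrt (cos x ^ 2 - sin y ^ 2)) ^ 4 /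
      ((2 * cos (x + y)) ^ 2 * (Q * sin x) ^ 2 * (P * sin y) ^ 2)) * (P * Q) ^ 2 := by
  have hbe : cos x ^ 2 - sin y ^ 2 = cos (x + y) * cos (x - y) := by
    rw [cos_add, cos_sub]
    have h1 := sin_sq_add_cos_sq x
    have h2 := sin_sq_add_cos_sq y
    linear_combination (-cos x ^ 2) * h2 + sin y ^ 2 * h1
  have hd : cos (x - y) = cos (x + y) + 2 * sin x * sin y := by
    rw [cos_add, cos_sub]; ring
  have hbpos : 0 < cos x ^ 2 - sin y ^ 2 := by rw [hbe]; positivity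
  have hs2 : Real.sqrt (cos x ^ 2 - sin y ^ 2) ^ 2 = cos x ^ 2 - sin y ^ 2 :=
    Real.sq_sqrt hbpos.le
  have hs : 0 < Real.sqrt (cos x ^ 2 - sin y ^ 2) := Real.sqrt_pos.2 hbpos
  set s := Real.sqrt (cos x ^ 2 - sin y ^ 2)
  rw [← hs2] at hbe ⊢
  rw [hd] at hbe
  generalize cos (x + y) = a at *
  generalize sin x = u at *
  generalize sin y = v at *
  have hprod : (s - a) * (s + a) = 2 * a * u * v := by linear_combination hbe
  have hne : 0 < s - a := by
    have : 0 < (s - a) * (s + a) := by rw [hprod]; positivity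
    exact (pos_iff_pos_of_mul_pos this).2 (by positivity)
  have hD : a ^ 2 + s ^ 2 ≠ 0 := by positivity
  have e1 : 1 + 2 * a * s / (a ^ 2 + s ^ 2) = (s + a) ^ 2 / (a ^ 2 + s ^ 2) := by
    field_simp; ring
  have e2 : 1 - 2 * a * s / (a ^ 2 + s ^ 2) = (s - a) ^ 2 / (a ^ 2 + s ^ 2) := by
    field_simp; ring
  rw [e1, e2, div_div_div_cancel_right₀ hD]
  have e3 : (2 * a) ^ 2 * (Q * u) ^ 2 * (P * v) ^ 2 = ((s - a) * (s + a)) ^ 2 * (P * Q) ^ 2 := by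
    rw [hprod]; ring
  rw [e3]
  have : s + a ≠ 0 := by positivity
  have := hne.ne'
  field_simp
  ring

lemma aux_sin : Tendsto (fun n : ℕ => (n : ℝ) * sin (π / n)) atTop (nhds π) := by
  have h0 : Tendsto (fun n : ℕ => π / (n : ℝ)) atTop (nhds 0) :=
    tendsto_const_div_atTop_nhds_zero_nat π
  have h := (Real.continuous_sinc.tendsto 0).comp h0
  have h2 := h.const_mul π
  rw [Real.sinc_zero, mul_one] at h2
  refine h2.congr' ?_
  filter_upwards [eventually_gt_atTop 0] with n hn
  have hn' : (0 : ℝ) < n := by exact_mod_cast hn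
  have : π / (n : ℝ) ≠ 0 := by positivity
  simp only [Function.comp]
  rw [Real.sinc_of_ne_zero this]
  field_simp

theorem stmt_13 :
    Tendsto (fun pq : ℕ × ℕ =>
        Real.log
            ((1 + 2 * cos (π / pq.2 + π / pq.1) *
                Real.sqrt (cos (π / pq.2) ^ 2 - sin (π / pq.1) ^ 2) /
                (cos (π / pq.2 + π / pq.1) ^ 2 +
                  (cos (π / pq.2) ^ 2 - sin (π / pq.1) ^ 2))) /
              (1 - 2 * cos (π / pq.2 + π / pq.1) *
                Real.sqrt (cos (π / pq.2) ^ 2 - sin (π / pq.1) ^ 2) /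
                (cos (π / pq.2 + π / pq.1) ^ 2 +
                  (cos (π / pq.2) ^ 2 - sin (π / pq.1) ^ 2)))) /
          (Real.log pq.1 + Real.log pq.2))
      (atTop ×ˢ atTop) (nhds 2) := by
  have h0 : Tendsto (fun n : ℕ => π / (n : ℝ)) atTop (nhds 0) :=
    tendsto_const_div_atTop_nhds_zero_nat π
  have f1 : Tendsto (Prod.fst : ℕ × ℕ → ℕ) (atTop ×ˢ atTop) atTop := tendsto_fst
  have f2 : Tendsto (Prod.snd : ℕ × ℕ → ℕ) (atTop ×ˢ atTop) atTop := tendsto_snd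
  have hy : Tendsto (fun pq : ℕ × ℕ => π / (pq.1 : ℝ)) (atTop ×ˢ atTop) (nhds 0) := h0.comp f1
  have hx : Tendsto (fun pq : ℕ × ℕ => π / (pq.2 : ℝ)) (atTop ×ˢ atTop) (nhds 0) := h0.comp f2
  have hP : Tendsto (fun pq : ℕ × ℕ => (pq.1 : ℝ) * sin (π / pq.1)) (atTop ×ˢ atTop) (nhds π) :=
    aux_sin.comp f1
  have hQ : Tendsto (fun pq : ℕ × ℕ => (pq.2 : ℝ) * sin (π / pq.2)) (atTop ×ˢ atTop) (nhds π) :=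
    aux_sin.comp f2
  have ha : Tendsto (fun pq : ℕ × ℕ => cos (π / pq.2 + π / pq.1)) (atTop ×ˢ atTop) (nhds 1) := by
    have := (Real.continuous_cos.tendsto _).comp (hx.add hy)
    simpa [Function.comp_def] using this
  have hb : Tendsto (fun pq : ℕ × ℕ => cos (π / pq.2 - π / pq.1)) (atTop ×ˢ atTop) (nhds 1) := by
    have := (Real.continuous_cos.tendsto _).comp (hx.sub hy)
    simpa [Function.comp_def] using this
  have hs : Tendsto (fun pq : ℕ × ℕ => Real.sqrt (cos (π / pq.2) ^ 2 - sin (π / pq.1) ^ 2))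
      (atTop ×ˢ atTop) (nhds 1) := by
    have h1 := (Real.continuous_cos.tendsto _).comp hx
    have h2 := (Real.continuous_sin.tendsto _).comp hy
    have := ((h1.pow 2).sub (h2.pow 2)).sqrt
    simpa [Function.comp_def] using this
  have hC := ((ha.add hs).pow 4).div ((((ha.const_mul 2).pow 2).mul (hQ.pow 2)).mul (hP.pow 2))
    (by positivity)
  have hCpos : (0 : ℝ) < (1 + 1) ^ 4 / ((2 * 1) ^ 2 * π ^ 2 * π ^ 2) := by positivity
  have hlogC := hC.log hCpos.ne'
  have hl : Tendsto (fun n : ℕ => Real.log n) atTop atTop :=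
    Real.tendsto_log_atTop.comp tendsto_natCast_atTop_atTop
  have hL : Tendsto (fun pq : ℕ × ℕ => Real.log pq.1 + Real.log pq.2) (atTop ×ˢ atTop) atTop :=
    (hl.comp f1).atTop_add_atTop (hl.comp f2)
  have hfin := (hlogC.div_atTop hL).add_const 2
  rw [zero_add] at hfin
  refine hfin.congr' ?_
  filter_upwards [f1.eventually (eventually_gt_atTop 1), f2.eventually (eventually_gt_atTop 1),
    ha.eventually (lt_mem_nhds one_pos), hb.eventually (lt_mem_nhds one_pos),
    hP.eventually (lt_mem_nhds pi_pos), hQ.eventually (lt_mem_nhds pi_pos),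
    hC.eventually (lt_mem_nhds hCpos), hL.eventually (eventually_gt_atTop 0)]
    with pq hp hq h1 h2 h3 h4 h5 h6
  have hp' : (0 : ℝ) < pq.1 := by exact_mod_cast (by omega : 0 < pq.1)
  have hq' : (0 : ℝ) < pq.2 := by exact_mod_cast (by omega : 0 < pq.2)
  rw [aux_ratio _ _ pq.1 pq.2 hp' hq' (pos_of_mul_pos_right h4 hq'.le)
    (pos_of_mul_pos_right h3 hp'.le) h1 h2]
  simp only [Pi.div_apply] at h5 ⊢
  rw [Real.log_mul h5.ne' (by positivity), Real.log_pow, Real.log_mul hp'.ne' hq'.ne', add_div]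
  congr 1
  field_simp
  norm_num
end
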